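/- (Fiacco) Suppose f and each h_i are convex in x, g is affine in x, and f, g, h are jointly continuously differentiable in (x, p). If the feasible-set map X(·) is nonempty-valued and uniformly compact near p, and MFCQ holds at every x ∈ Σ(p), then the value function φ is directionally differentiable at p in every direction h ∈ ℝ^ℓ, with φ'(p; h) = min_{x ∈ Σ(p)} max_{(y,z) ∈ M_p(x)} ∇_p L(x,y,z,p)ᵀ h. -/

import Mathlib

/-!
The directional derivative is squeezed between a primal and a dual estimate of the difference
quotient `(φ(p + t hdir) - φ(p)) / t` as `t ↓ 0`, with
`S(x) = sup {∇_p L(x,y,z,p)ᵀ hdir : (y,z) ∈ M_p(x)}`.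

*Upper estimate.* Fix `x ∈ Σ(p)` and linearize the problem at `(x, p)` in the direction `hdir`.
A direction `d` that is strictly feasible for the linearized constraints is the velocity of a
curve of points feasible for `p + t hdir` (`exists_feasible_curve`). Since `g` is affine in `x`,
the equality constraints along the curve are restored by solving a linear system whose matrix is
the identity at `t = 0`. Hence the limsup of the quotient is at most the linearized objective at
`d` (`eventually_quotient_lt`). Linear programming duality, proved by Hahn–Banach separation
under MFCQ (`exists_dual_of_strict_lower_bound`), identifies the infimum over `d` with `S(x)`.
The same argument for the zero perturbation shows that `M_p(x)` is nonempty, and weak duality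
bounds the set defining `S(x)`.

*Lower estimate.* If the quotients stay bounded above along some `t k ↓ 0`, minimizers of the
perturbed problems accumulate, by uniform compactness, at some `x ∈ Σ(p)`. For `(y,z) ∈ M_p(x)`
convexity makes `x` a global minimizer of `L(·,y,z,p)`, so `φ(p + t hdir) - φ(p)` is at least
`L(u,y,z,p + t hdir) - L(u,y,z,p)` at the perturbed minimizer `u`; strict differentiability of
`L` at `(x, p)` turns this into `t ∇_p L(x,y,z,p)ᵀ hdir + o(t)` (`exists_sol_of_quotient_le`).
Therefore no subsequential limit of the quotients is below `S(x) ≥ inf S` for such an `x`.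
-/

open Filter Topology Set Matrix

attribute [local instance] Classical.propDecidable

namespace SensNLP

variable {n l me mi : ℕ}
variable (f : (Fin n → ℝ) → (Fin l → ℝ) → ℝ)
  (g : (Fin n → ℝ) → (Fin l → ℝ) → Fin me → ℝ)
  (h : (Fin n → ℝ) → (Fin l → ℝ) → Fin mi → ℝ)
  (p : Fin l → ℝ) (x : Fin n → ℝ) (y : Fin me → ℝ) (z : Fin mi → ℝ)
  (hdir : Fin l → ℝ)

/-- The Lagrangian `L(x,y,z,p) = f(x,p) + yᵀ g(x,p) + zᵀ h(x,p)`. -/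
noncomputable def Lag : ℝ :=
  f x p + ∑ i, y i * g x p i + ∑ j, z j * h x p j

/-- The gradient (with respect to `x`) of a scalar function, as a vector. -/
noncomputable def gradx (φ : (Fin n → ℝ) → ℝ) (x : Fin n → ℝ) : Fin n → ℝ :=
  fun j => fderiv ℝ φ x (Pi.single j 1)

/-- The quadratic form `dᵀ ∇²φ(x) d` of the Hessian of a scalar function. -/
noncomputable def hessQ (φ : (Fin n → ℝ) → ℝ) (x d : Fin n → ℝ) : ℝ :=
  fderiv ℝ (fun x' => fderiv ℝ φ x' d) x d

/-- KKT conditions: stationarity of the Lagrangian in `x`, primal feasibility,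
dual feasibility and complementarity. -/
def IsKKT : Prop :=
  fderiv ℝ (fun x' => Lag f g h p x' y z) x = 0 ∧
  g x p = 0 ∧ h x p ≤ 0 ∧ 0 ≤ z ∧ ∑ j, z j * h x p j = 0

/-- The multiplier set `M_p(x)`. -/
def MultSet : Set ((Fin me → ℝ) × (Fin mi → ℝ)) :=
  {yz | IsKKT f g h p x yz.1 yz.2}

/-- LICQ: linear independence of the gradients of equality and active inequality
constraints. -/
def LICQ : Prop :=
  LinearIndependent ℝ
    (fun i : Fin me ⊕ {j : Fin mi // h x p j = 0} =>
      Sum.elim (fun i => gradx (fun x' => g x' p i) x)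
        (fun j => gradx (fun x' => h x' p j.1) x) i)

/-- MFCQ. -/
def MFCQ : Prop :=
  LinearIndependent ℝ (fun i : Fin me => gradx (fun x' => g x' p i) x) ∧
  ∃ d : Fin n → ℝ,
    (∀ i, fderiv ℝ (fun x' => g x' p i) x d = 0) ∧
    (∀ j, h x p j = 0 → fderiv ℝ (fun x' => h x' p j) x d < 0)

/-- SMFCQ (relative to a multiplier `z`). -/
def SMFCQ : Prop :=
  LinearIndependent ℝ
    (fun i : Fin me ⊕ {j : Fin mi // h x p j = 0 ∧ 0 < z j} =>
      Sum.elim (fun i => gradx (fun x' => g x' p i) x)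
        (fun j => gradx (fun x' => h x' p j.1) x) i) ∧
  ∃ d : Fin n → ℝ,
    (∀ i, fderiv ℝ (fun x' => g x' p i) x d = 0) ∧
    (∀ j, h x p j = 0 → 0 < z j → fderiv ℝ (fun x' => h x' p j) x d = 0) ∧
    (∀ j, h x p j = 0 → z j = 0 → fderiv ℝ (fun x' => h x' p j) x d < 0)

/-- CRCQ at `x` (for parameter `p`): every subfamily of gradients of equality
constraints and active inequality constraints has constant rank near `x`. -/
def CRCQ : Prop :=
  ∃ W ∈ 𝓝 x, ∀ (J : Finset (Fin me)) (I : Finset (Fin mi)),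
    (∀ i ∈ I, h x p i = 0) →
    ∃ r : ℕ, ∀ x' ∈ W,
      Module.finrank ℝ ↥(Submodule.span ℝ
        ((fun i => gradx (fun x'' => g x'' p i) x') '' ↑J ∪
         (fun i => gradx (fun x'' => h x'' p i) x') '' ↑I)) = r

/-- The critical cone `C_p(x)`. -/
def criticalCone : Set (Fin n → ℝ) :=
  {d | fderiv ℝ (fun x' => f x' p) x d ≤ 0 ∧
       (∀ i, fderiv ℝ (fun x' => g x' p i) x d = 0) ∧
       (∀ j, h x p j = 0 → fderiv ℝ (fun x' => h x' p j) x d ≤ 0)}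

/-- The set `D_p(x;z)` used in the strong second-order sufficiency condition. -/
def Dset : Set (Fin n → ℝ) :=
  {d | (∀ i, fderiv ℝ (fun x' => g x' p i) x d = 0) ∧
       (∀ j, h x p j = 0 → 0 < z j → fderiv ℝ (fun x' => h x' p j) x d = 0)}

/-- SOSC. -/
def SOSC : Prop :=
  ∃ yz ∈ MultSet f g h p x, ∀ d ∈ criticalCone f g h p x, d ≠ 0 →
    0 < hessQ (fun x' => Lag f g h p x' yz.1 yz.2) x d

/-- SSOSC. -/
def SSOSC : Prop :=
  ∃ yz ∈ MultSet f g h p x, ∀ d ∈ Dset g h p x yz.2, d ≠ 0 →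
    0 < hessQ (fun x' => Lag f g h p x' yz.1 yz.2) x d

/-- GSSOSC. -/
def GSSOSC : Prop :=
  ∀ yz ∈ MultSet f g h p x, ∀ d ∈ Dset g h p x yz.2, d ≠ 0 →
    0 < hessQ (fun x' => Lag f g h p x' yz.1 yz.2) x d

/-- Strict complementarity slackness: no weakly active constraint. -/
def SCS : Prop :=
  ∀ j, h x p j = 0 → z j ≠ 0

/-- `x` is a local solution (local minimizer) of NLP(p). -/
def IsLocalSol : Prop :=
  g x p = 0 ∧ h x p ≤ 0 ∧
  ∃ W ∈ 𝓝 x, ∀ x' ∈ W, g x' p = 0 → h x' p ≤ 0 → f x p ≤ f x' p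

/-- The directional critical set `K_p(x,z;h)`. -/
def Kset : Set (Fin n → ℝ) :=
  {d | (∀ i, fderiv ℝ (fun x' => g x' p i) x d
          + fderiv ℝ (fun p' => g x p' i) p hdir = 0) ∧
       (∀ j, h x p j = 0 → 0 < z j →
          fderiv ℝ (fun x' => h x' p j) x d
          + fderiv ℝ (fun p' => h x p' j) p hdir = 0) ∧
       (∀ j, h x p j = 0 → z j = 0 →
          fderiv ℝ (fun x' => h x' p j) x d
          + fderiv ℝ (fun p' => h x p' j) p hdir ≤ 0)}

/-- The objective of the sensitivity QP:
`½ dᵀ ∇²ₓₓL d + hᵀ ∇²ₚₓL d`. -/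
noncomputable def QPobj (d : Fin n → ℝ) : ℝ :=
  (1 / 2) * hessQ (fun x' => Lag f g h p x' y z) x d +
    fderiv ℝ (fun p' => fderiv ℝ (fun x'' => Lag f g h p' x'' y z) x d) p hdir

/-- The set `S_p(x;h)` of multipliers maximizing the linear functional
`(y,z) ↦ yᵀ (J_p g) h + zᵀ (J_p h) h` over `M_p(x)`. -/
def Sset : Set ((Fin me → ℝ) × (Fin mi → ℝ)) :=
  {yz ∈ MultSet f g h p x | ∀ yz' ∈ MultSet f g h p x,
    (∑ i, yz'.1 i * fderiv ℝ (fun p' => g x p' i) p hdir) +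
      (∑ j, yz'.2 j * fderiv ℝ (fun p' => h x p' j) p hdir) ≤
    (∑ i, yz.1 i * fderiv ℝ (fun p' => g x p' i) p hdir) +
      (∑ j, yz.2 j * fderiv ℝ (fun p' => h x p' j) p hdir)}

/-- A `PC¹` (piecewise continuously differentiable) function at a point. -/
def PC1At {N' : ℕ} (F : (Fin l → ℝ) → (Fin N' → ℝ)) (p : Fin l → ℝ) : Prop :=
  ∃ N ∈ 𝓝 p, ∃ k : ℕ, ∃ Fs : Fin k → (Fin l → ℝ) → (Fin N' → ℝ),
    ContinuousOn F N ∧ (∀ i, ContDiffOn ℝ 1 (Fs i) N) ∧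
    ∀ q ∈ N, ∃ i, F q = Fs i q

/-- A piecewise linear (continuous selection of finitely many linear maps) function. -/
def IsPiecewiseLinear {N' : ℕ} (D : (Fin l → ℝ) → (Fin N' → ℝ)) : Prop :=
  Continuous D ∧ ∃ k : ℕ, ∃ T : Fin k → (Fin l → ℝ) →ₗ[ℝ] (Fin N' → ℝ),
    ∀ v, ∃ i, D v = T i v


/-- The feasible set `X(q)` of NLP(q). -/
def feasSet (q : Fin l → ℝ) : Set (Fin n → ℝ) :=
  {x' | g x' q = 0 ∧ h x' q ≤ 0}

/-- The value function `φ(q)` of NLP(q). -/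
noncomputable def valFun (q : Fin l → ℝ) : ℝ :=
  sInf ((fun x' => f x' q) '' feasSet g h q)

/-- The solution set `Σ(q)` of NLP(q). -/
def solSet (q : Fin l → ℝ) : Set (Fin n → ℝ) :=
  {x' ∈ feasSet g h q | f x' q = valFun f g h q}

/-! ### Derivatives of jointly smooth and of affine functions -/

/-- The derivative of a jointly `C¹` function is assembled from its two partial derivatives. -/
theorem hasStrictFDerivAt_partials {E P : Type*} [NormedAddCommGroup E] [NormedSpace ℝ E]
    [NormedAddCommGroup P] [NormedSpace ℝ P] (φ : E → P → ℝ)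
    (hφ : ContDiff ℝ 1 fun q : E × P => φ q.1 q.2) (x : E) (p : P) :
    HasStrictFDerivAt (fun q : E × P => φ q.1 q.2)
      ((fderiv ℝ (fun x' => φ x' p) x).coprod (fderiv ℝ (fun p' => φ x p') p)) (x, p) := by
  have hD := hφ.contDiffAt.hasStrictFDerivAt (x := (x, p)) one_ne_zero
  have h1 : HasFDerivAt (fun x' => φ x' p) _ x :=
    HasFDerivAt.comp (g := fun q : E × P => φ q.1 q.2) (f := fun x' => (x', p)) x hD.hasFDerivAt
      (hasFDerivAt_prodMk_left x p)
  have h2 : HasFDerivAt (fun p' => φ x p') _ p :=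
    HasFDerivAt.comp (g := fun q : E × P => φ q.1 q.2) (f := fun p' => (x, p')) p hD.hasFDerivAt
      (hasFDerivAt_prodMk_right x p)
  rw [h1.fderiv, h2.fderiv]
  have hsum : ((fderiv ℝ (fun q : E × P => φ q.1 q.2) (x, p)).comp
      (ContinuousLinearMap.inl ℝ E P)).coprod
      ((fderiv ℝ (fun q : E × P => φ q.1 q.2) (x, p)).comp (ContinuousLinearMap.inr ℝ E P))
      = fderiv ℝ (fun q : E × P => φ q.1 q.2) (x, p) := by
    ext v <;> simp
  rw [hsum]
  exact hD

/-- Chain rule along a curve `t ↦ (ξ t, p + t v)` whose first component has velocity `d`. -/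
theorem hasDerivAt_along_curve {E P : Type*} [NormedAddCommGroup E] [NormedSpace ℝ E]
    [NormedAddCommGroup P] [NormedSpace ℝ P] (φ : E → P → ℝ)
    (hφ : ContDiff ℝ 1 fun q : E × P => φ q.1 q.2) (x : E) (p v : P) (ξ : ℝ → E) (d : E)
    (hξ : HasDerivAt ξ d 0) (hξ0 : ξ 0 = x) :
    HasDerivAt (fun t : ℝ => φ (ξ t) (p + t • v))
      (fderiv ℝ (fun x' => φ x' p) x d + fderiv ℝ (fun p' => φ x p') p v) 0 := by
  have hD := (hasStrictFDerivAt_partials φ hφ x p).hasFDerivAt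
  have hv : HasDerivAt (fun t : ℝ => p + t • v) v 0 := by
    simpa using ((hasDerivAt_id (0 : ℝ)).smul_const v).const_add p
  have hc := hξ.prodMk hv
  have h0 : (x, p) = (ξ 0, p + (0 : ℝ) • v) := by simp [hξ0]
  rw [h0] at hD
  have := hD.comp_hasDerivAt (0 : ℝ) hc
  exact this.congr_deriv (by simp)

theorem fderiv_of_affine {n : ℕ} (φ : (Fin n → ℝ) → ℝ)
    (hφ : ∃ (T : (Fin n → ℝ) →ₗ[ℝ] ℝ) (c : ℝ), ∀ x', φ x' = T x' + c) (x v : Fin n → ℝ) :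
    fderiv ℝ φ x v = φ v - φ 0 := by
  obtain ⟨T, c, hT⟩ := hφ
  have : HasFDerivAt φ (LinearMap.toContinuousLinearMap T) x := by
    have h1 := ((LinearMap.toContinuousLinearMap T).hasFDerivAt (x := x)).add_const c
    refine h1.congr_of_eventuallyEq (Eventually.of_forall fun x' => ?_)
    simp [hT]
  rw [this.fderiv]; simp [hT]

/-- A linearly independent family of gradients has a biorthogonal family of vectors. -/
theorem exists_biorthogonal {n me : ℕ} (φ : Fin me → (Fin n → ℝ) → ℝ) (x : Fin n → ℝ)
    (hli : LinearIndependent ℝ (fun i : Fin me => gradx (φ i) x)) :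
    ∃ b : Fin me → Fin n → ℝ, ∀ i k, fderiv ℝ (φ i) x (b k) = if i = k then 1 else 0 := by
  have hinj := hli.fintypeLinearCombination_injective
  obtain ⟨S, hS⟩ := LinearMap.exists_leftInverse_of_injective
    (Fintype.linearCombination ℝ (fun i : Fin me => gradx (φ i) x)) (LinearMap.ker_eq_bot.2 hinj)
  have hSg : ∀ i, S (gradx (φ i) x) = Pi.single i 1 := by
    intro i
    have := LinearMap.congr_fun hS (Pi.single i 1)
    simpa using this
  refine ⟨fun k j => S (Pi.single j 1) k, fun i k => ?_⟩
  have h1 : ∀ (D : (Fin n → ℝ) →ₗ[ℝ] ℝ) (v : Fin n → ℝ),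
      D v = ∑ j, v j * D (Pi.single j 1) := by
    intro D v
    conv_lhs => rw [pi_eq_sum_univ' v]
    simp [map_sum]
  have h2 : S (gradx (φ i) x) k = ∑ j, gradx (φ i) x j * S (Pi.single j 1) k :=
    h1 ((LinearMap.proj k).comp S) _
  rw [hSg] at h2
  have h3 := h1 (fderiv ℝ (φ i) x : (Fin n → ℝ) →ₗ[ℝ] ℝ) (fun j => S (Pi.single j 1) k)
  simp only [ContinuousLinearMap.coe_coe] at h3
  rw [h3]
  calc _ = ∑ j, gradx (φ i) x j * S (Pi.single j 1) k := by
        refine Finset.sum_congr rfl fun j _ => ?_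
        rw [mul_comm]; rfl
    _ = _ := by rw [← h2]; simp [Pi.single_apply, eq_comm]

/-! ### Linear programming duality -/

/-- Strong duality for linear programs: a lower bound `μ` for `F d + c` over the directions `d`
with `A d + a = 0` and `H d + b < 0` is matched by a dual point. The direction `d₀` of the
Mangasarian–Fromovitz condition excludes a vertical separating hyperplane, and `d₁` witnesses
that the equality constraints are solvable. -/
theorem exists_dual_of_strict_lower_bound {E ι : Type*} [NormedAddCommGroup E] [NormedSpace ℝ E]
    [Fintype ι] {me : ℕ} (F : E →L[ℝ] ℝ) (A : Fin me → E →L[ℝ] ℝ) (H : ι → E →L[ℝ] ℝ)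
    (a : Fin me → ℝ) (b : ι → ℝ) (c μ : ℝ) (d₁ d₀ : E)
    (hd₁ : ∀ i, A i d₁ + a i = 0) (hA₀ : ∀ i, A i d₀ = 0) (hH₀ : ∀ j, H j d₀ < 0)
    (hμ : ∀ d, (∀ i, A i d + a i = 0) → (∀ j, H j d + b j < 0) → μ ≤ F d + c) :
    ∃ (y : Fin me → ℝ) (z : ι → ℝ), (∀ j, 0 ≤ z j) ∧
      (∀ e, F e + ∑ i, y i * A i e + ∑ j, z j * H j e = 0) ∧
      μ ≤ c + ∑ i, y i * a i + ∑ j, z j * b j := by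
  -- Translate by `d₁` so that the equality constraints become homogeneous.
  set b' : ι → ℝ := fun j => b j + H j d₁ with hb'
  set c' : ℝ := c + F d₁ with hc'
  let C : Set ((ι → ℝ) × ℝ) :=
    {q | ∃ e, (∀ i, A i e = 0) ∧ (∀ j, H j e + b' j < q.1 j) ∧ F e + c' < q.2}
  have hCopen : IsOpen C := by
    have : C = ⋃ e ∈ {e : E | ∀ i, A i e = 0},
        ((⋂ j, {q : (ι → ℝ) × ℝ | H j e + b' j < q.1 j}) ∩ {q | F e + c' < q.2}) := by
      ext q
      simp only [C, Set.mem_ofPred_eq, Set.mem_iUnion, Set.mem_inter_iff, Set.mem_iInter,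
        exists_prop]
    rw [this]
    refine isOpen_biUnion fun e _ => IsOpen.inter (isOpen_iInter_of_finite fun j => ?_) ?_
    · exact isOpen_lt continuous_const (by fun_prop)
    · exact isOpen_lt continuous_const (by fun_prop)
  have hCconv : Convex ℝ C := by
    rintro q ⟨e, he1, he2, he3⟩ q' ⟨e', he1', he2', he3'⟩ s s' hs hs' hss
    refine ⟨s • e + s' • e', fun i => by simp [he1, he1'], fun j => ?_, ?_⟩
    · have h1 := he2 j
      have h2 := he2' j
      simp only [map_add, map_smul, smul_eq_mul, Prod.fst_add, Prod.smul_fst, Pi.add_apply,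
        Pi.smul_apply]
      have : s * H j e + s' * H j e' + b' j
          = s * (H j e + b' j) + s' * (H j e' + b' j) := by
        linear_combination (-b' j) * hss
      rw [this]
      rcases hs.eq_or_lt with rfl | hs0
      · have : s' = 1 := by linarith
        subst this; simpa using h2
      · exact add_lt_add_of_lt_of_le (by gcongr) (by gcongr)
    · simp only [map_add, map_smul, smul_eq_mul, Prod.snd_add, Prod.smul_snd]
      have : s * F e + s' * F e' + c' = s * (F e + c') + s' * (F e' + c') := by
        linear_combination (-c') * hss
      rw [this]
      rcases hs.eq_or_lt with rfl | hs0
      · have : s' = 1 := by linarith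
        subst this; simpa using he3'
      · exact add_lt_add_of_lt_of_le (by gcongr) (by gcongr)
  have hnot : ((0, μ) : (ι → ℝ) × ℝ) ∉ C := by
    rintro ⟨e, he1, he2, he3⟩
    have := hμ (d₁ + e) (fun i => by simp [he1, hd₁ i]) (fun j => by
      have := he2 j
      simp [hb'] at this ⊢; linarith)
    simp [hc'] at this he3; linarith
  obtain ⟨Λ, hΛ⟩ := geometric_hahn_banach_open_point hCconv hCopen hnot
  set z : ι → ℝ := fun j => -Λ (Pi.single j 1, 0) with hz
  set σ : ℝ := -Λ (0, 1) with hσ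
  have hΛf : ∀ w s, Λ (w, s) = -(∑ j, w j * z j) - s * σ := by
    intro w s
    have h1 : ((w, s) : (ι → ℝ) × ℝ)
        = (∑ j, w j • ((Pi.single j 1, 0) : (ι → ℝ) × ℝ)) + s • ((0, 1) : (ι → ℝ) × ℝ) := by
      ext k
      · simp [Prod.fst_sum, Finset.sum_apply, Pi.single_apply]
      · simp [Prod.snd_sum]
    rw [h1, map_add, map_sum, map_smul]
    simp only [map_smul, smul_eq_mul, hz, hσ, mul_neg, Finset.sum_neg_distrib]
    ring
  -- Separation, written as a strict inequality for the slacks `r`, `r'`.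
  have hsep : ∀ e, (∀ i, A i e = 0) → ∀ (r : ι → ℝ) (r' : ℝ), (∀ j, 0 < r j) → 0 < r' →
      μ * σ < ∑ j, (H j e + b' j + r j) * z j + (F e + c' + r') * σ := by
    intro e he r r' hr hr'
    have := hΛ (fun j => H j e + b' j + r j, F e + c' + r')
      ⟨e, he, fun j => by simp [hr j], by simp [hr']⟩
    rw [hΛf, hΛf] at this
    simp at this; linarith
  have hle : ∀ e, (∀ i, A i e = 0) →
      μ * σ ≤ ∑ j, (H j e + b' j) * z j + (F e + c') * σ := by
    intro e he
    have hlim : Tendsto (fun r : ℝ => ∑ j, (H j e + b' j + r) * z j + (F e + c' + r) * σ)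
        (𝓝[>] 0) (𝓝 (∑ j, (H j e + b' j + 0) * z j + (F e + c' + 0) * σ)) := by
      apply tendsto_nhdsWithin_of_tendsto_nhds
      exact Continuous.tendsto (by fun_prop) 0
    simp only [add_zero] at hlim
    refine ge_of_tendsto hlim ?_
    filter_upwards [self_mem_nhdsWithin] with r hr
    exact (hsep e he (fun _ => r) r (fun _ => hr) hr).le
  -- A real affine function bounded below on `[0, ∞)` has nonnegative slope.
  have hslope : ∀ X s : ℝ, (∀ T : ℝ, 0 ≤ T → μ * σ ≤ X + T * s) → 0 ≤ s := by
    intro X s hX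
    by_contra! hs
    have h0 := hX 0 le_rfl
    have h1 := hX ((X - μ * σ + 1) / (-s)) (by
      apply div_nonneg <;> linarith)
    have h2 : (X - μ * σ + 1) / (-s) * s = -(X - μ * σ + 1) := by
      rw [div_mul_eq_mul_div, div_eq_iff (by linarith)]; ring
    linarith
  have hz0 : ∀ j, 0 ≤ z j := by
    intro j
    refine hslope (∑ k, (H k 0 + b' k + 1) * z k + (F 0 + c' + 1) * σ) _ fun T hT => ?_
    have := (hsep 0 (by simp) (fun k => 1 + T * (Pi.single j 1 : ι → ℝ) k) 1
      (fun k => by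
        by_cases hk : k = j
        · subst hk; simp; linarith
        · simp [hk]) one_pos).le
    refine this.trans_eq ?_
    have h3 : ∑ k, (H k 0 + b' k + (1 + T * (Pi.single j 1 : ι → ℝ) k)) * z k
        = ∑ k, (H k 0 + b' k + 1) * z k + T * z j := by
      have : T * z j = ∑ k, T * (Pi.single j 1 : ι → ℝ) k * z k := by
        simp [Pi.single_apply]
      rw [this, ← Finset.sum_add_distrib]
      exact Finset.sum_congr rfl fun k _ => by ring
    rw [h3]; ring
  have hσ0 : 0 ≤ σ := by
    refine hslope (∑ k, (H k 0 + b' k + 1) * z k + (F 0 + c' + 1) * σ) _ fun T hT => ?_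
    have := (hsep 0 (by simp) (fun k => 1) (1 + T) (fun _ => one_pos) (by linarith)).le
    linarith
  have hstat0 : ∀ e, (∀ i, A i e = 0) → 0 ≤ ∑ j, H j e * z j + F e * σ := by
    intro e he
    refine hslope (∑ k, b' k * z k + c' * σ) _ fun T _ => ?_
    have := hle (T • e) (fun i => by simp [he i])
    refine this.trans_eq ?_
    simp only [map_smul, smul_eq_mul, add_mul, Finset.sum_add_distrib, mul_add, Finset.mul_sum]
    simp only [mul_assoc]; ring
  have hstat : ∀ e, (∀ i, A i e = 0) → ∑ j, H j e * z j + F e * σ = 0 := by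
    intro e he
    have h1 := hstat0 e he
    have h2 := hstat0 (-e) (fun i => by simp [he i])
    simp at h2
    linarith
  have hval : μ * σ ≤ ∑ j, b' j * z j + c' * σ := by
    simpa using hle 0 (by simp)
  -- `σ = 0` would force `z = 0` by testing with `d₀`, making the functional vanish.
  have hσpos : 0 < σ := by
    rcases hσ0.eq_or_lt with h0 | h0
    · exfalso
      have h1 := hstat d₀ hA₀
      rw [← h0, mul_zero, add_zero] at h1
      have h2 : ∀ j, H j d₀ * z j = 0 := by
        have := (Finset.sum_eq_zero_iff_of_nonpos (s := Finset.univ)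
          (f := fun j => H j d₀ * z j)
          (fun j _ => mul_nonpos_of_nonpos_of_nonneg (hH₀ j).le (hz0 j))).1 h1
        exact fun j => this j (Finset.mem_univ j)
      have h3 : ∀ j, z j = 0 := fun j =>
        (mul_eq_zero.1 (h2 j)).resolve_left (hH₀ j).ne
      have := hsep 0 (by simp) (fun _ => 1) 1 (fun _ => one_pos) one_pos
      simp [h3, ← h0] at this
    · exact h0
  -- The Lagrangian form vanishes on `⋂ ker A i`, hence lies in the span of the `A i`.
  let K : E →ₗ[ℝ] ℝ := -((F : E →ₗ[ℝ] ℝ) + ∑ j, (z j / σ) • (H j : E →ₗ[ℝ] ℝ))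
  have hK : ∀ e, K e = -(F e + ∑ j, z j / σ * H j e) := by
    intro e; simp [K]
  have hmem : K ∈ Submodule.span ℝ (Set.range fun i => (A i : E →ₗ[ℝ] ℝ)) := by
    apply mem_span_of_iInf_ker_le_ker
    intro e he
    simp only [Submodule.mem_iInf, LinearMap.mem_ker, ContinuousLinearMap.coe_coe] at he ⊢
    have h1 := hstat e he
    have h2 : ∑ j, z j / σ * H j e = (∑ j, H j e * z j) / σ := by
      rw [Finset.sum_div]; exact Finset.sum_congr rfl fun j _ => by ring
    rw [hK, h2, neg_eq_zero]
    field_simp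
    linarith
  obtain ⟨y, hy⟩ := (Submodule.mem_span_range_iff_exists_fun ℝ).1 hmem
  have hy' : ∀ e, ∑ i, y i * A i e = -(F e + ∑ j, z j / σ * H j e) := by
    intro e
    rw [← hK, ← hy]; simp
  refine ⟨y, fun j => z j / σ, fun j => div_nonneg (hz0 j) hσ0, fun e => ?_, ?_⟩
  · rw [hy']; ring
  · have h1 : ∑ i, y i * a i = F d₁ + ∑ j, z j / σ * H j d₁ := by
      have : ∑ i, y i * a i = -∑ i, y i * A i d₁ := by
        rw [← Finset.sum_neg_distrib]
        exact Finset.sum_congr rfl fun i _ => by linear_combination y i * hd₁ i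
      rw [this, hy']; ring
    have h2 : ∑ j, b' j * z j = σ * (∑ j, z j / σ * b j + ∑ j, z j / σ * H j d₁) := by
      rw [← Finset.sum_add_distrib, Finset.mul_sum]
      refine Finset.sum_congr rfl fun j _ => ?_
      simp only [hb']; field_simp
    rw [h2] at hval
    have h3 : μ ≤ (∑ j, z j / σ * b j + ∑ j, z j / σ * H j d₁) + c' :=
      le_of_mul_le_mul_right (by linarith) hσpos
    rw [h1]; linarith

/-! ### Feasible curves -/

theorem hasDerivAt_mul_of_zero (c G : ℝ → ℝ) (hc : ContinuousAt c 0) (hG : HasDerivAt G 0 0)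
    (hG0 : G 0 = 0) : HasDerivAt (fun t => c t * G t) 0 0 := by
  rw [hasDerivAt_iff_tendsto_slope_zero] at hG ⊢
  have h1 := (hc.tendsto.mono_left (nhdsWithin_le_nhds (s := {0}ᶜ))).mul hG
  rw [mul_zero] at h1
  refine h1.congr fun t => ?_
  simp only [zero_add, hG0, smul_eq_mul, mul_zero, sub_zero]
  ring

/-- A strictly feasible direction `d` of the linearized constraints is the velocity at `0` of a
curve of feasible points for the parameters `p + t hdir`. Because `g(·, q)` is affine, the curve
`x + t d` is corrected to satisfy the equality constraints by solving a linear system. -/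
theorem exists_feasible_curve {n l me mi : ℕ}
    (g : (Fin n → ℝ) → (Fin l → ℝ) → Fin me → ℝ) (h : (Fin n → ℝ) → (Fin l → ℝ) → Fin mi → ℝ)
    (p : Fin l → ℝ)
    (hgc1 : ∀ i : Fin me, ContDiff ℝ 1 fun q : (Fin n → ℝ) × (Fin l → ℝ) => g q.1 q.2 i)
    (hhc1 : ∀ j : Fin mi, ContDiff ℝ 1 fun q : (Fin n → ℝ) × (Fin l → ℝ) => h q.1 q.2 j)
    (hgaff : ∀ (q : Fin l → ℝ) (i : Fin me),
      ∃ (T : (Fin n → ℝ) →ₗ[ℝ] ℝ) (c : ℝ), ∀ x' : Fin n → ℝ, g x' q i = T x' + c)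
    (x : Fin n → ℝ) (hx : x ∈ feasSet g h p)
    (hli : LinearIndependent ℝ (fun i : Fin me => gradx (fun x' => g x' p i) x))
    (hdir : Fin l → ℝ) (d : Fin n → ℝ)
    (hdeq : ∀ i, fderiv ℝ (fun x' => g x' p i) x d + fderiv ℝ (fun p' => g x p' i) p hdir = 0)
    (hdin : ∀ j, h x p j = 0 →
      fderiv ℝ (fun x' => h x' p j) x d + fderiv ℝ (fun p' => h x p' j) p hdir < 0) :
    ∃ ξ : ℝ → Fin n → ℝ, ξ 0 = x ∧ HasDerivAt ξ d 0 ∧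
      ∀ᶠ t in 𝓝[>] (0 : ℝ), ξ t ∈ feasSet g h (p + t • hdir) := by
  obtain ⟨b, hb⟩ := exists_biorthogonal (fun i x' => g x' p i) x hli
  let G : ℝ → Fin me → ℝ := fun t i => g (x + t • d) (p + t • hdir) i
  let M : ℝ → Matrix (Fin me) (Fin me) ℝ := fun t =>
    Matrix.of fun i k => g (b k) (p + t • hdir) i - g 0 (p + t • hdir) i
  have hline : HasDerivAt (fun t : ℝ => x + t • d) d 0 := by
    simpa using ((hasDerivAt_id (0 : ℝ)).smul_const d).const_add x
  have hG0 : ∀ i, G 0 i = 0 := fun i => by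
    have := congrFun hx.1 i
    simpa [G] using this
  have hGd : ∀ i, HasDerivAt (fun t => G t i) 0 0 := fun i => by
    have := hasDerivAt_along_curve (fun x' p' => g x' p' i) (hgc1 i) x p hdir _ d hline (by simp)
    rw [hdeq i] at this
    exact this
  have hgcont : ∀ i (v : Fin n → ℝ), Continuous fun t : ℝ => g v (p + t • hdir) i := fun i v =>
    (hgc1 i).continuous.comp (f := fun t : ℝ => (v, p + t • hdir)) (by fun_prop)
  have hMc : Continuous M :=
    continuous_matrix fun i k => (hgcont i (b k)).sub (hgcont i 0)
  have hM0 : M 0 = 1 := by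
    ext i k
    have h1 := fderiv_of_affine (fun x' => g x' p i) (hgaff p i) x (b k)
    rw [hb] at h1
    simp only [M, Matrix.of_apply, zero_smul, add_zero, ← h1, Matrix.one_apply]
  have hdet : ContinuousAt (fun t => (M t).det) 0 := hMc.matrix_det.continuousAt
  have hdet0 : (M 0).det ≠ 0 := by rw [hM0]; simp
  have hinv : ∀ k i, ContinuousAt (fun t => (M t)⁻¹ k i) 0 := fun k i => by
    have : (fun t => (M t)⁻¹ k i) = fun t => ((M t).det)⁻¹ * (M t).adjugate k i := by
      funext t
      simp [Matrix.inv_def]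
    rw [this]
    exact (hdet.inv₀ hdet0).mul (hMc.matrix_adjugate.matrix_elem k i).continuousAt
  let w : ℝ → Fin me → ℝ := fun t k => -∑ i, (M t)⁻¹ k i * G t i
  have hw0 : ∀ k, w 0 k = 0 := fun k => by simp [w, hG0]
  have hwd : ∀ k, HasDerivAt (fun t => w t k) 0 0 := fun k => by
    have := (HasDerivAt.fun_sum (u := Finset.univ) fun i _ =>
      hasDerivAt_mul_of_zero _ _ (hinv k i) (hGd i) (hG0 i)).neg
    exact this.congr_deriv (by simp)
  have hξd : HasDerivAt (fun t => x + t • d + ∑ k, w t k • b k) d 0 := by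
    have := hline.add (HasDerivAt.fun_sum (u := Finset.univ) fun k _ => (hwd k).smul_const (b k))
    exact this.congr_deriv (by simp)
  refine ⟨fun t => x + t • d + ∑ k, w t k • b k, by simp [hw0], hξd, ?_⟩
  have hin : ∀ j, ∀ᶠ t in 𝓝[>] (0 : ℝ),
      h (x + t • d + ∑ k, w t k • b k) (p + t • hdir) j ≤ 0 := by
    intro j
    have hD := hasDerivAt_along_curve (fun x' p' => h x' p' j) (hhc1 j) x p hdir _ d hξd
      (by simp [hw0])
    have h0 : h (x + (0 : ℝ) • d + ∑ k, w 0 k • b k) (p + (0 : ℝ) • hdir) j = h x p j := by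
      simp [hw0]
    rcases (hx.2 j).lt_or_eq with hneg | hzero
    · have := hD.continuousAt.tendsto
      simp only [h0] at this
      exact ((this.eventually (gt_mem_nhds hneg)).filter_mono nhdsWithin_le_nhds).mono
        fun t ht => ht.le
    · have h2 := ((hasDerivAt_iff_tendsto_slope_zero.1 hD).mono_left
        (nhdsWithin_mono 0 (fun t (ht : 0 < t) => ht.ne'))).eventually
        (gt_mem_nhds (hdin j hzero))
      filter_upwards [h2, self_mem_nhdsWithin] with t ht (htpos : 0 < t)
      simp only [zero_add, h0, smul_eq_mul] at ht
      rw [hzero] at ht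
      simp only [Pi.zero_apply, sub_zero] at ht
      exact (neg_of_mul_neg_right ht (inv_pos.2 htpos).le).le
  have hdetev : ∀ᶠ t in 𝓝[>] (0 : ℝ), (M t).det ≠ 0 :=
    (hdet.eventually_ne hdet0).filter_mono nhdsWithin_le_nhds
  filter_upwards [hdetev, eventually_all.2 hin] with t ht hin'
  refine ⟨?_, hin'⟩
  funext i
  obtain ⟨T, c, hT⟩ := hgaff (p + t • hdir) i
  have h1 : ∀ k, T (b k) = M t i k := fun k => by simp [M, hT]
  have h2 : M t *ᵥ ((M t)⁻¹ *ᵥ G t) = G t := by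
    rw [Matrix.mulVec_mulVec, Matrix.mul_nonsing_inv _ (isUnit_iff_ne_zero.2 ht),
      Matrix.one_mulVec]
  have h3 : w t = -((M t)⁻¹ *ᵥ G t) := by
    funext k; simp [w, Matrix.mulVec, dotProduct]
  have h4 : ∑ k, M t i k * w t k = -G t i := by
    have : (M t *ᵥ w t) i = -G t i := by rw [h3, Matrix.mulVec_neg, h2]; rfl
    exact this
  have h5 : G t i = T (x + t • d) + c := hT _
  rw [hT, map_add, map_sum]
  simp only [map_smul, smul_eq_mul, h1, Pi.zero_apply]
  simp only [mul_comm (w t _), h4, h5, map_add, map_smul, smul_eq_mul]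
  ring

/-! ### Derivatives of the Lagrangian -/

theorem contDiff_lag
    (hfc1 : ContDiff ℝ 1 fun q : (Fin n → ℝ) × (Fin l → ℝ) => f q.1 q.2)
    (hgc1 : ∀ i : Fin me, ContDiff ℝ 1 fun q : (Fin n → ℝ) × (Fin l → ℝ) => g q.1 q.2 i)
    (hhc1 : ∀ j : Fin mi, ContDiff ℝ 1 fun q : (Fin n → ℝ) × (Fin l → ℝ) => h q.1 q.2 j) :
    ContDiff ℝ 1 fun q : (Fin n → ℝ) × (Fin l → ℝ) => Lag f g h q.2 q.1 y z := by
  unfold Lag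
  exact (hfc1.add (ContDiff.sum fun i _ => contDiff_const.mul (hgc1 i))).add
    (ContDiff.sum fun j _ => contDiff_const.mul (hhc1 j))

theorem differentiableAt_left {E P : Type*} [NormedAddCommGroup E] [NormedSpace ℝ E]
    [NormedAddCommGroup P] [NormedSpace ℝ P] (φ : E → P → ℝ)
    (hφ : ContDiff ℝ 1 fun q : E × P => φ q.1 q.2) (x : E) (p : P) :
    DifferentiableAt ℝ (fun x' => φ x' p) x :=
  (hφ.comp (contDiff_prodMk_left p)).contDiffAt.differentiableAt one_ne_zero

theorem differentiableAt_right {E P : Type*} [NormedAddCommGroup E] [NormedSpace ℝ E]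
    [NormedAddCommGroup P] [NormedSpace ℝ P] (φ : E → P → ℝ)
    (hφ : ContDiff ℝ 1 fun q : E × P => φ q.1 q.2) (x : E) (p : P) :
    DifferentiableAt ℝ (fun p' => φ x p') p :=
  (hφ.comp (contDiff_prodMk_right x)).contDiffAt.differentiableAt one_ne_zero

theorem fderiv_lag_x
    (hfc1 : ContDiff ℝ 1 fun q : (Fin n → ℝ) × (Fin l → ℝ) => f q.1 q.2)
    (hgc1 : ∀ i : Fin me, ContDiff ℝ 1 fun q : (Fin n → ℝ) × (Fin l → ℝ) => g q.1 q.2 i)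
    (hhc1 : ∀ j : Fin mi, ContDiff ℝ 1 fun q : (Fin n → ℝ) × (Fin l → ℝ) => h q.1 q.2 j)
    (v : Fin n → ℝ) :
    fderiv ℝ (fun x' => Lag f g h p x' y z) x v =
      fderiv ℝ (fun x' => f x' p) x v + ∑ i, y i * fderiv ℝ (fun x' => g x' p i) x v +
        ∑ j, z j * fderiv ℝ (fun x' => h x' p j) x v := by
  have h1 := (differentiableAt_left f hfc1 x p).hasFDerivAt
  have h2 := fun i => (differentiableAt_left (fun a b => g a b i) (hgc1 i) x p).hasFDerivAt
  have h3 := fun i => (differentiableAt_left (fun a b => h a b i) (hhc1 i) x p).hasFDerivAt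
  have h4 : HasFDerivAt (fun x' => Lag f g h p x' y z) _ x :=
    (h1.fun_add (HasFDerivAt.fun_sum (u := Finset.univ) fun i _ => (h2 i).const_mul (y i))).fun_add
      (HasFDerivAt.fun_sum (u := Finset.univ) fun i _ => (h3 i).const_mul (z i))
  rw [h4.fderiv]
  simp

theorem fderiv_lag_p
    (hfc1 : ContDiff ℝ 1 fun q : (Fin n → ℝ) × (Fin l → ℝ) => f q.1 q.2)
    (hgc1 : ∀ i : Fin me, ContDiff ℝ 1 fun q : (Fin n → ℝ) × (Fin l → ℝ) => g q.1 q.2 i)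
    (hhc1 : ∀ j : Fin mi, ContDiff ℝ 1 fun q : (Fin n → ℝ) × (Fin l → ℝ) => h q.1 q.2 j)
    (v : Fin l → ℝ) :
    fderiv ℝ (fun p' => Lag f g h p' x y z) p v =
      fderiv ℝ (fun p' => f x p') p v + ∑ i, y i * fderiv ℝ (fun p' => g x p' i) p v +
        ∑ j, z j * fderiv ℝ (fun p' => h x p' j) p v := by
  have h1 := (differentiableAt_right f hfc1 x p).hasFDerivAt
  have h2 := fun i => (differentiableAt_right (fun a b => g a b i) (hgc1 i) x p).hasFDerivAt
  have h3 := fun i => (differentiableAt_right (fun a b => h a b i) (hhc1 i) x p).hasFDerivAt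
  have h4 : HasFDerivAt (fun p' => Lag f g h p' x y z) _ p :=
    (h1.fun_add (HasFDerivAt.fun_sum (u := Finset.univ) fun i _ => (h2 i).const_mul (y i))).fun_add
      (HasFDerivAt.fun_sum (u := Finset.univ) fun i _ => (h3 i).const_mul (z i))
  rw [h4.fderiv]
  simp

/-! ### Convexity: KKT points minimize the Lagrangian -/

/-- Gradient inequality for a differentiable convex function. -/
theorem fderiv_sub_le_of_convexOn {E : Type*} [NormedAddCommGroup E] [NormedSpace ℝ E]
    (φ : E → ℝ) (hφ : ConvexOn ℝ Set.univ φ) (x x' : E) (hd : DifferentiableAt ℝ φ x) :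
    fderiv ℝ φ x (x' - x) ≤ φ x' - φ x := by
  have hline : HasDerivAt (fun t : ℝ => x + t • (x' - x)) (x' - x) 0 := by
    simpa using ((hasDerivAt_id (0 : ℝ)).smul_const (x' - x)).const_add x
  have hd' : HasFDerivAt φ (fderiv ℝ φ x) (x + (0 : ℝ) • (x' - x)) := by
    simpa using hd.hasFDerivAt
  have h1 := (hasDerivAt_iff_tendsto_slope_zero.1 (hd'.comp_hasDerivAt 0 hline)).mono_left
    (nhdsWithin_mono 0 (fun t (ht : t ∈ Set.Ioi (0 : ℝ)) => ne_of_gt ht))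
  refine le_of_tendsto h1 ?_
  have hlt : ∀ᶠ t in 𝓝[>] (0 : ℝ), t < 1 :=
    (gt_mem_nhds one_pos).filter_mono nhdsWithin_le_nhds
  filter_upwards [self_mem_nhdsWithin, hlt] with t (ht : 0 < t) ht1
  have h2 := hφ.2 (Set.mem_univ x) (Set.mem_univ x') (by linarith : 0 ≤ 1 - t) ht.le (by ring)
  have h3 : (1 - t) • x + t • x' = x + t • (x' - x) := by module
  rw [h3] at h2
  simp only [smul_eq_mul] at h2
  simp only [Function.comp, zero_add, zero_smul, add_zero, smul_eq_mul]
  rw [inv_mul_le_iff₀ ht]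
  linarith

/-- At a KKT point the Lagrangian equals the objective and, being convex and stationary there,
is globally minimal; so `f x p` bounds the Lagrangian from below. -/
theorem lag_le_of_mem_multSet
    (hfc1 : ContDiff ℝ 1 fun q : (Fin n → ℝ) × (Fin l → ℝ) => f q.1 q.2)
    (hgc1 : ∀ i : Fin me, ContDiff ℝ 1 fun q : (Fin n → ℝ) × (Fin l → ℝ) => g q.1 q.2 i)
    (hhc1 : ∀ j : Fin mi, ContDiff ℝ 1 fun q : (Fin n → ℝ) × (Fin l → ℝ) => h q.1 q.2 j)
    (hfconv : ∀ q : Fin l → ℝ, ConvexOn ℝ Set.univ (fun x' => f x' q))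
    (hhconv : ∀ (q : Fin l → ℝ) (j : Fin mi), ConvexOn ℝ Set.univ (fun x' => h x' q j))
    (hgaff : ∀ (q : Fin l → ℝ) (i : Fin me),
      ∃ (T : (Fin n → ℝ) →ₗ[ℝ] ℝ) (c : ℝ), ∀ x' : Fin n → ℝ, g x' q i = T x' + c)
    (yz : (Fin me → ℝ) × (Fin mi → ℝ)) (hyz : yz ∈ MultSet f g h p x) (x' : Fin n → ℝ) :
    f x p ≤ Lag f g h p x' yz.1 yz.2 := by
  obtain ⟨hst, hg0, -, hz0, hcomp⟩ := hyz
  have h1 := fderiv_lag_x f g h p x yz.1 yz.2 hfc1 hgc1 hhc1 (x' - x)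
  rw [hst, _root_.zero_apply] at h1
  have h2 := fderiv_sub_le_of_convexOn _ (hfconv p) x x' (differentiableAt_left f hfc1 x p)
  have h3 : ∑ j, yz.2 j * fderiv ℝ (fun x' => h x' p j) x (x' - x)
      ≤ ∑ j, yz.2 j * h x' p j := by
    have : ∑ j, yz.2 j * fderiv ℝ (fun x' => h x' p j) x (x' - x)
        ≤ ∑ j, (yz.2 j * h x' p j - yz.2 j * h x p j) := by
      refine Finset.sum_le_sum fun j _ => ?_
      rw [← mul_sub]
      exact mul_le_mul_of_nonneg_left (fderiv_sub_le_of_convexOn _ (hhconv p j) x x'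
        (differentiableAt_left (fun a b => h a b j) (hhc1 j) x p)) (hz0 j)
    rwa [Finset.sum_sub_distrib, hcomp, sub_zero] at this
  have h4 : ∑ i, yz.1 i * fderiv ℝ (fun x' => g x' p i) x (x' - x)
      = ∑ i, yz.1 i * g x' p i := by
    refine Finset.sum_congr rfl fun i _ => ?_
    have h5 := congrFun hg0 i
    obtain ⟨T, c, hT⟩ := hgaff p i
    rw [fderiv_of_affine (fun x' => g x' p i) (hgaff p i)]
    simp only [hT, map_sub, map_zero, Pi.zero_apply] at h5 ⊢
    linear_combination (-yz.1 i) * h5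
  unfold Lag
  linarith

/-! ### Compactness and attainment -/

theorem isCompact_feasSet
    (hgc1 : ∀ i : Fin me, ContDiff ℝ 1 fun q : (Fin n → ℝ) × (Fin l → ℝ) => g q.1 q.2 i)
    (hhc1 : ∀ j : Fin mi, ContDiff ℝ 1 fun q : (Fin n → ℝ) × (Fin l → ℝ) => h q.1 q.2 j)
    (N : Set (Fin l → ℝ)) (hbd : Bornology.IsBounded (⋃ q ∈ N, feasSet g h q))
    (q : Fin l → ℝ) (hq : q ∈ N) : IsCompact (feasSet g h q) := by
  refine Metric.isCompact_of_isClosed_isBounded ?_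
    (hbd.subset (Set.subset_biUnion_of_mem (u := fun q => feasSet g h q) hq))
  have h1 : feasSet g h q = (⋂ i, {x' | g x' q i = 0}) ∩ ⋂ j, {x' | h x' q j ≤ 0} := by
    ext x'
    simp only [feasSet, Set.mem_ofPred_eq, Set.mem_inter_iff, Set.mem_iInter, funext_iff,
      Pi.le_def, Pi.zero_apply]
  rw [h1]
  refine (isClosed_iInter fun i => ?_).inter (isClosed_iInter fun j => ?_)
  · exact isClosed_eq ((hgc1 i).continuous.comp (f := fun x' => (x', q)) (by fun_prop))
      continuous_const
  · exact isClosed_le ((hhc1 j).continuous.comp (f := fun x' => (x', q)) (by fun_prop))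
      continuous_const

/-- Over the neighborhood `N` the infimum defining `φ(q)` is attained, and it is a true lower
bound. -/
theorem valFun_attained
    (hfc1 : ContDiff ℝ 1 fun q : (Fin n → ℝ) × (Fin l → ℝ) => f q.1 q.2)
    (hgc1 : ∀ i : Fin me, ContDiff ℝ 1 fun q : (Fin n → ℝ) × (Fin l → ℝ) => g q.1 q.2 i)
    (hhc1 : ∀ j : Fin mi, ContDiff ℝ 1 fun q : (Fin n → ℝ) × (Fin l → ℝ) => h q.1 q.2 j)
    (N : Set (Fin l → ℝ)) (hne : ∀ q ∈ N, (feasSet g h q).Nonempty)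
    (hbd : Bornology.IsBounded (⋃ q ∈ N, feasSet g h q)) (q : Fin l → ℝ) (hq : q ∈ N) :
    (solSet f g h q).Nonempty ∧ ∀ x' ∈ feasSet g h q, valFun f g h q ≤ f x' q := by
  have hK := isCompact_feasSet g h hgc1 hhc1 N hbd q hq
  have hfc : Continuous fun x' => f x' q :=
    hfc1.continuous.comp (f := fun x' => (x', q)) (by fun_prop)
  obtain ⟨x₀, hx₀, hmin⟩ := hK.exists_sInf_image_eq (hne q hq) hfc.continuousOn
  exact ⟨⟨x₀, hx₀, hmin.symm⟩, fun x' hx' =>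
    csInf_le (hK.bddBelow_image hfc.continuousOn) (Set.mem_image_of_mem _ hx')⟩

/-! ### The linearized problem and the multiplier set -/

theorem exists_eq_direction (hm : MFCQ g h p x) (a : Fin me → ℝ) :
    ∃ d, ∀ i, fderiv ℝ (fun x' => g x' p i) x d + a i = 0 := by
  obtain ⟨b, hb⟩ := exists_biorthogonal (fun i x' => g x' p i) x hm.1
  refine ⟨∑ k, (-a k) • b k, fun i => ?_⟩
  simp [map_sum, hb]

/-- Under MFCQ the linearized constraints have a strictly feasible direction. -/
theorem exists_strict_direction (hm : MFCQ g h p x) :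
    ∃ d, (∀ i, fderiv ℝ (fun x' => g x' p i) x d + fderiv ℝ (fun p' => g x p' i) p hdir = 0) ∧
      ∀ j, h x p j = 0 →
        fderiv ℝ (fun x' => h x' p j) x d + fderiv ℝ (fun p' => h x p' j) p hdir < 0 := by
  obtain ⟨d₁, hd₁⟩ := exists_eq_direction g h p x hm
    (fun i => fderiv ℝ (fun p' => g x p' i) p hdir)
  obtain ⟨-, d₀, hA, hH⟩ := hm
  have hev : ∀ j, ∀ᶠ T : ℝ in atTop, h x p j = 0 →
      fderiv ℝ (fun x' => h x' p j) x d₁ + T * fderiv ℝ (fun x' => h x' p j) x d₀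
        + fderiv ℝ (fun p' => h x p' j) p hdir < 0 := by
    intro j
    by_cases hj : h x p j = 0
    · have h1 := (tendsto_id (α := ℝ) (x := atTop)).atTop_mul_const_of_neg (hH j hj)
      filter_upwards [h1.eventually (eventually_lt_atBot
        (-(fderiv ℝ (fun x' => h x' p j) x d₁ + fderiv ℝ (fun p' => h x p' j) p hdir)))]
        with T hT _
      simp only [id] at hT
      linarith
    · exact Eventually.of_forall fun T hT => absurd hT hj
  obtain ⟨T, hT⟩ := (eventually_all.2 hev).exists
  refine ⟨d₁ + T • d₀, fun i => ?_, fun j hj => ?_⟩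
  · simp [hA, hd₁]
  · simpa using hT j hj

/-- Strong duality for the linearized problem at `x`, with the dual point in `M_p(x)`. -/
theorem exists_mult_of_strict_lower_bound
    (hfc1 : ContDiff ℝ 1 fun q : (Fin n → ℝ) × (Fin l → ℝ) => f q.1 q.2)
    (hgc1 : ∀ i : Fin me, ContDiff ℝ 1 fun q : (Fin n → ℝ) × (Fin l → ℝ) => g q.1 q.2 i)
    (hhc1 : ∀ j : Fin mi, ContDiff ℝ 1 fun q : (Fin n → ℝ) × (Fin l → ℝ) => h q.1 q.2 j)
    (hx : x ∈ feasSet g h p) (hm : MFCQ g h p x) (μ : ℝ)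
    (hμ : ∀ d, (∀ i, fderiv ℝ (fun x' => g x' p i) x d
          + fderiv ℝ (fun p' => g x p' i) p hdir = 0) →
      (∀ j, h x p j = 0 →
        fderiv ℝ (fun x' => h x' p j) x d + fderiv ℝ (fun p' => h x p' j) p hdir < 0) →
      μ ≤ fderiv ℝ (fun x' => f x' p) x d + fderiv ℝ (fun p' => f x p') p hdir) :
    ∃ yz ∈ MultSet f g h p x, μ ≤ fderiv ℝ (fun p' => Lag f g h p' x yz.1 yz.2) p hdir := by
  obtain ⟨d₁, hd₁⟩ := exists_eq_direction g h p x hm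
    (fun i => fderiv ℝ (fun p' => g x p' i) p hdir)
  obtain ⟨-, d₀, hA₀, hH₀⟩ := hm
  obtain ⟨y, z, hz, hst, hval⟩ := exists_dual_of_strict_lower_bound
    (ι := {j : Fin mi // h x p j = 0})
    (fderiv ℝ (fun x' => f x' p) x) (fun i => fderiv ℝ (fun x' => g x' p i) x)
    (fun j => fderiv ℝ (fun x' => h x' p j.1) x)
    (fun i => fderiv ℝ (fun p' => g x p' i) p hdir)
    (fun j => fderiv ℝ (fun p' => h x p' j.1) p hdir)
    (fderiv ℝ (fun p' => f x p') p hdir) μ d₁ d₀ hd₁ hA₀ (fun j => hH₀ j.1 j.2)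
    (fun d hd1 hd2 => hμ d hd1 fun j hj => hd2 ⟨j, hj⟩)
  -- Inactive constraints get multiplier zero.
  let z' : Fin mi → ℝ := fun j => if hj : h x p j = 0 then z ⟨j, hj⟩ else 0
  have hsum : ∀ u : Fin mi → ℝ, ∑ j, z' j * u j = ∑ j : {j : Fin mi // h x p j = 0}, z j * u j := by
    intro u
    have h1 : ∑ j, z' j * u j = ∑ j with h x p j = 0, z' j * u j := by
      refine (Finset.sum_filter_of_ne fun j _ hj => ?_).symm
      by_contra hne
      exact hj (by simp [z', hne])
    rw [h1, Finset.sum_subtype (p := fun j => h x p j = 0) _ (by simp)]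
    refine Finset.sum_congr rfl fun j _ => ?_
    simp [z', j.2]
  refine ⟨(y, z'), ⟨?_, hx.1, hx.2, fun j => ?_, ?_⟩, ?_⟩
  · ext1 v
    rw [fderiv_lag_x f g h p x y z' hfc1 hgc1 hhc1 v, hsum, hst]
    rfl
  · simp only [z', Pi.zero_apply]
    split_ifs with hj
    · exact hz _
    · exact le_rfl
  · rw [hsum]
    exact Finset.sum_eq_zero fun j _ => by rw [j.2, mul_zero]
  · rw [fderiv_lag_p f g h p x y z' hfc1 hgc1 hhc1 hdir, hsum]
    exact hval

/-- Weak duality for the linearized problem at `x`. -/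
theorem fderiv_lag_le_of_strict_direction
    (hfc1 : ContDiff ℝ 1 fun q : (Fin n → ℝ) × (Fin l → ℝ) => f q.1 q.2)
    (hgc1 : ∀ i : Fin me, ContDiff ℝ 1 fun q : (Fin n → ℝ) × (Fin l → ℝ) => g q.1 q.2 i)
    (hhc1 : ∀ j : Fin mi, ContDiff ℝ 1 fun q : (Fin n → ℝ) × (Fin l → ℝ) => h q.1 q.2 j)
    (d : Fin n → ℝ)
    (hd1 : ∀ i, fderiv ℝ (fun x' => g x' p i) x d + fderiv ℝ (fun p' => g x p' i) p hdir = 0)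
    (hd2 : ∀ j, h x p j = 0 →
      fderiv ℝ (fun x' => h x' p j) x d + fderiv ℝ (fun p' => h x p' j) p hdir < 0)
    (yz : (Fin me → ℝ) × (Fin mi → ℝ)) (hyz : yz ∈ MultSet f g h p x) :
    fderiv ℝ (fun p' => Lag f g h p' x yz.1 yz.2) p hdir ≤
      fderiv ℝ (fun x' => f x' p) x d + fderiv ℝ (fun p' => f x p') p hdir := by
  obtain ⟨hst, -, hfeas, hz0, hcomp⟩ := hyz
  have h1 := fderiv_lag_x f g h p x yz.1 yz.2 hfc1 hgc1 hhc1 d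
  rw [hst, _root_.zero_apply] at h1
  rw [fderiv_lag_p f g h p x yz.1 yz.2 hfc1 hgc1 hhc1 hdir]
  have h2 : ∑ i, yz.1 i * fderiv ℝ (fun p' => g x p' i) p hdir
      = -∑ i, yz.1 i * fderiv ℝ (fun x' => g x' p i) x d := by
    rw [← Finset.sum_neg_distrib]
    exact Finset.sum_congr rfl fun i _ => by linear_combination yz.1 i * hd1 i
  have hcs : ∀ j, yz.2 j * h x p j = 0 := fun j =>
    (Finset.sum_eq_zero_iff_of_nonpos (s := Finset.univ) (f := fun j => yz.2 j * h x p j)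
      (fun j _ => mul_nonpos_of_nonneg_of_nonpos (hz0 j) (hfeas j))).1 hcomp j (Finset.mem_univ j)
  have h3 : ∑ j, yz.2 j * fderiv ℝ (fun p' => h x p' j) p hdir
      ≤ -∑ j, yz.2 j * fderiv ℝ (fun x' => h x' p j) x d := by
    rw [← Finset.sum_neg_distrib]
    refine Finset.sum_le_sum fun j _ => ?_
    rcases mul_eq_zero.1 (hcs j) with hj | hj
    · simp [hj]
    · have := mul_nonneg (hz0 j) (neg_nonneg.2 (hd2 j hj).le)
      linarith
  linarith

/-! ### Estimates for the difference quotient of the value function -/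

/-- Primal upper bound: a strictly feasible direction of the linearized problem bounds the
difference quotient of the value function. -/
theorem eventually_quotient_lt
    (hfc1 : ContDiff ℝ 1 fun q : (Fin n → ℝ) × (Fin l → ℝ) => f q.1 q.2)
    (hgc1 : ∀ i : Fin me, ContDiff ℝ 1 fun q : (Fin n → ℝ) × (Fin l → ℝ) => g q.1 q.2 i)
    (hhc1 : ∀ j : Fin mi, ContDiff ℝ 1 fun q : (Fin n → ℝ) × (Fin l → ℝ) => h q.1 q.2 j)
    (hgaff : ∀ (q : Fin l → ℝ) (i : Fin me),
      ∃ (T : (Fin n → ℝ) →ₗ[ℝ] ℝ) (c : ℝ), ∀ x' : Fin n → ℝ, g x' q i = T x' + c)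
    (N : Set (Fin l → ℝ)) (hN : N ∈ 𝓝 p)
    (hne : ∀ q ∈ N, (feasSet g h q).Nonempty)
    (hbd : Bornology.IsBounded (⋃ q ∈ N, feasSet g h q))
    (hx : x ∈ solSet f g h p) (hm : MFCQ g h p x) (d : Fin n → ℝ)
    (hd1 : ∀ i, fderiv ℝ (fun x' => g x' p i) x d + fderiv ℝ (fun p' => g x p' i) p hdir = 0)
    (hd2 : ∀ j, h x p j = 0 →
      fderiv ℝ (fun x' => h x' p j) x d + fderiv ℝ (fun p' => h x p' j) p hdir < 0)
    (r : ℝ) (hr : fderiv ℝ (fun x' => f x' p) x d + fderiv ℝ (fun p' => f x p') p hdir < r) :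
    ∀ᶠ t in 𝓝[>] (0 : ℝ), (valFun f g h (p + t • hdir) - valFun f g h p) / t < r := by
  obtain ⟨ξ, hξ0, hξd, hξ⟩ :=
    exists_feasible_curve g h p hgc1 hhc1 hgaff x hx.1 hm.1 hdir d hd1 hd2
  have hD := hasDerivAt_along_curve f hfc1 x p hdir ξ d hξd hξ0
  have h1 := ((hasDerivAt_iff_tendsto_slope_zero.1 hD).mono_left
    (nhdsWithin_mono 0 (fun t (ht : t ∈ Set.Ioi (0 : ℝ)) => ne_of_gt ht))).eventually
    (gt_mem_nhds hr)
  have hNev : ∀ᶠ t in 𝓝[>] (0 : ℝ), p + t • hdir ∈ N := by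
    have hc : Tendsto (fun t : ℝ => p + t • hdir) (𝓝 0) (𝓝 p) := by
      have : Continuous fun t : ℝ => p + t • hdir := by fun_prop
      simpa using this.tendsto 0
    exact (hc.eventually hN).filter_mono nhdsWithin_le_nhds
  filter_upwards [h1, hξ, hNev, self_mem_nhdsWithin] with t ht hξt hNt (htpos : 0 < t)
  have h2 := (valFun_attained f g h hfc1 hgc1 hhc1 N hne hbd _ hNt).2 _ hξt
  simp only [zero_add, zero_smul, add_zero, hξ0, smul_eq_mul] at ht
  rw [inv_mul_lt_iff₀ htpos] at ht
  rw [div_lt_iff₀ htpos, ← hx.2]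
  linarith

/-- Dual lower bound: along any parameter sequence `p + t k hdir` with `t k ↓ 0` and difference
quotients bounded above, minimizers accumulate at some `x ∈ Σ(p)`, and every multiplier of that
`x` bounds the quotients from below in the limit. -/
theorem exists_sol_of_quotient_le
    (hfc1 : ContDiff ℝ 1 fun q : (Fin n → ℝ) × (Fin l → ℝ) => f q.1 q.2)
    (hgc1 : ∀ i : Fin me, ContDiff ℝ 1 fun q : (Fin n → ℝ) × (Fin l → ℝ) => g q.1 q.2 i)
    (hhc1 : ∀ j : Fin mi, ContDiff ℝ 1 fun q : (Fin n → ℝ) × (Fin l → ℝ) => h q.1 q.2 j)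
    (hfconv : ∀ q : Fin l → ℝ, ConvexOn ℝ Set.univ (fun x' => f x' q))
    (hhconv : ∀ (q : Fin l → ℝ) (j : Fin mi), ConvexOn ℝ Set.univ (fun x' => h x' q j))
    (hgaff : ∀ (q : Fin l → ℝ) (i : Fin me),
      ∃ (T : (Fin n → ℝ) →ₗ[ℝ] ℝ) (c : ℝ), ∀ x' : Fin n → ℝ, g x' q i = T x' + c)
    (N : Set (Fin l → ℝ)) (hN : N ∈ 𝓝 p)
    (hne : ∀ q ∈ N, (feasSet g h q).Nonempty)
    (hbd : Bornology.IsBounded (⋃ q ∈ N, feasSet g h q))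
    (t : ℕ → ℝ) (ht : Tendsto t atTop (𝓝[>] 0)) (r₀ : ℝ)
    (hr₀ : ∀ᶠ k in atTop, (valFun f g h (p + t k • hdir) - valFun f g h p) / t k ≤ r₀) :
    ∃ x ∈ solSet f g h p, ∀ yz ∈ MultSet f g h p x, ∀ r : ℝ,
      (∀ᶠ k in atTop, (valFun f g h (p + t k • hdir) - valFun f g h p) / t k ≤ r) →
      fderiv ℝ (fun p' => Lag f g h p' x yz.1 yz.2) p hdir ≤ r := by
  have ht0 : Tendsto t atTop (𝓝 0) := ht.mono_right nhdsWithin_le_nhds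
  have htpos : ∀ᶠ k in atTop, 0 < t k := ht.eventually self_mem_nhdsWithin
  have hq : Tendsto (fun k => p + t k • hdir) atTop (𝓝 p) := by
    simpa using (ht0.smul_const hdir).const_add p
  have hqN : ∀ᶠ k in atTop, p + t k • hdir ∈ N := hq.eventually hN
  have hex : ∀ k, ∃ u : Fin n → ℝ, p + t k • hdir ∈ N → u ∈ solSet f g h (p + t k • hdir) := by
    intro k
    by_cases hk : p + t k • hdir ∈ N
    · obtain ⟨u, hu⟩ := (valFun_attained f g h hfc1 hgc1 hhc1 N hne hbd _ hk).1
      exact ⟨u, fun _ => hu⟩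
    · exact ⟨0, fun hk' => absurd hk' hk⟩
  choose u hu using hex
  have hub : ∃ᶠ k in atTop, u k ∈ ⋃ q ∈ N, feasSet g h q :=
    (hqN.mono fun k hk => Set.mem_biUnion hk (hu k hk).1).frequently
  obtain ⟨x, -, s, hs, hlim⟩ := tendsto_subseq_of_frequently_bounded hbd hub
  have hsT := hs.tendsto_atTop
  have hqs := hq.comp hsT
  have hpair : Tendsto (fun k => (u (s k), p + t (s k) • hdir)) atTop (𝓝 (x, p)) :=
    hlim.prodMk_nhds hqs
  have hNs := hsT.eventually hqN
  have hxfeas : x ∈ feasSet g h p := by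
    refine ⟨funext fun i => ?_, fun j => ?_⟩
    · refine tendsto_nhds_unique (((hgc1 i).continuous.tendsto (x, p)).comp hpair)
        (tendsto_const_nhds.congr' ?_)
      filter_upwards [hNs] with k hk
      exact (congrFun (hu _ hk).1.1 i).symm
    · refine le_of_tendsto (((hhc1 j).continuous.tendsto (x, p)).comp hpair) ?_
      filter_upwards [hNs] with k hk
      exact (hu _ hk).1.2 j
  have hpv := (valFun_attained f g h hfc1 hgc1 hhc1 N hne hbd p (mem_of_mem_nhds hN)).2
  have hxsol : x ∈ solSet f g h p := by
    refine ⟨hxfeas, le_antisymm ?_ (hpv x hxfeas)⟩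
    have h1 : Tendsto (fun k => valFun f g h p + t (s k) * r₀) atTop (𝓝 (valFun f g h p)) := by
      simpa using ((ht0.comp hsT).mul_const r₀).const_add (valFun f g h p)
    refine le_of_tendsto_of_tendsto ((hfc1.continuous.tendsto (x, p)).comp hpair) h1 ?_
    filter_upwards [hNs, hsT.eventually hr₀, hsT.eventually htpos] with k hk hrk hpk
    rw [div_le_iff₀ hpk] at hrk
    have := (hu _ hk).2
    simp only [Function.comp]
    linarith
  refine ⟨x, hxsol, fun yz hyz r hr => ?_⟩
  -- Strict differentiability at `(x, p)` controls `L(u, p + t hdir) - L(u, p)` as `u → x`.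
  have hD := hasStrictFDerivAt_partials (fun x' p' => Lag f g h p' x' yz.1 yz.2)
    (contDiff_lag f g h yz.1 yz.2 hfc1 hgc1 hhc1) x p
  have hpair0 : Tendsto (fun k => (u (s k), p)) atTop (𝓝 (x, p)) :=
    hlim.prodMk_nhds tendsto_const_nhds
  have hlo := hD.isLittleO.comp_tendsto (hpair.prodMk_nhds hpair0)
  refine le_of_forall_pos_le_add fun ε hε => ?_
  have hbnd := hlo.bound (c := ε / (‖hdir‖ + 1)) (by positivity)
  obtain ⟨k, hk, hNk, hrk, hpk⟩ := (hbnd.and (hNs.and ((hsT.eventually hr).and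
    (hsT.eventually htpos)))).exists
  simp only [Function.comp, Prod.mk_sub_mk, sub_self, add_sub_cancel_left,
    ContinuousLinearMap.coprod_apply, map_zero, zero_add, map_smul, smul_eq_mul,
    Prod.norm_mk, norm_zero, norm_smul] at hk
  rw [max_eq_right (by positivity), Real.norm_eq_abs, Real.norm_eq_abs, abs_of_pos hpk] at hk
  have h1 := (abs_le.1 hk).1
  have h2 : ε / (‖hdir‖ + 1) * (t (s k) * ‖hdir‖) ≤ t (s k) * ε := by
    have : ε / (‖hdir‖ + 1) * ‖hdir‖ ≤ ε := by
      rw [div_mul_eq_mul_div, div_le_iff₀ (by positivity)]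
      nlinarith [norm_nonneg hdir]
    nlinarith
  have h3 : f x p ≤ Lag f g h p (u (s k)) yz.1 yz.2 :=
    lag_le_of_mem_multSet f g h p x hfc1 hgc1 hhc1 hfconv hhconv hgaff yz hyz _
  -- At a feasible point the Lagrangian with `z ≥ 0` does not exceed the objective.
  have h4 : Lag f g h (p + t (s k) • hdir) (u (s k)) yz.1 yz.2
      ≤ f (u (s k)) (p + t (s k) • hdir) := by
    have hfe := (hu _ hNk).1
    have e1 : ∑ i, yz.1 i * g (u (s k)) (p + t (s k) • hdir) i = 0 :=
      Finset.sum_eq_zero fun i _ => by rw [hfe.1]; simp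
    have e2 : ∑ j, yz.2 j * h (u (s k)) (p + t (s k) • hdir) j ≤ 0 :=
      Finset.sum_nonpos fun j _ => mul_nonpos_of_nonneg_of_nonpos (hyz.2.2.2.1 j) (hfe.2 j)
    unfold Lag
    linarith
  rw [div_le_iff₀ hpk] at hrk
  have h5 := (hu _ hNk).2
  have h6 := hxsol.2
  have h7 : t (s k) * fderiv ℝ (fun p' => Lag f g h p' x yz.1 yz.2) p hdir
      ≤ t (s k) * (r + ε) := by linarith
  exact le_of_mul_le_mul_left h7 hpk

/-- **Fiacco, convex case.** If `f` and `h` are convex in `x`,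
`g` is affine in `x`, all jointly `C¹`, the feasible-set map is nonempty-valued
and uniformly compact near `p`, and MFCQ holds at every solution, then the value
function is directionally differentiable at `p` with
`φ'(p;h) = min_{x ∈ Σ(p)} max_{(y,z) ∈ M_p(x)} ∇_p L(x,y,z,p)ᵀ h`. -/
theorem fiacco_convex_value_directional_derivative
    (hfc1 : ContDiff ℝ 1 fun q : (Fin n → ℝ) × (Fin l → ℝ) => f q.1 q.2)
    (hgc1 : ∀ i : Fin me, ContDiff ℝ 1 fun q : (Fin n → ℝ) × (Fin l → ℝ) => g q.1 q.2 i)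
    (hhc1 : ∀ j : Fin mi, ContDiff ℝ 1 fun q : (Fin n → ℝ) × (Fin l → ℝ) => h q.1 q.2 j)
    -- f and h convex in x, g affine in x
    (hfconv : ∀ q : Fin l → ℝ, ConvexOn ℝ Set.univ (fun x' => f x' q))
    (hhconv : ∀ (q : Fin l → ℝ) (j : Fin mi), ConvexOn ℝ Set.univ (fun x' => h x' q j))
    (hgaff : ∀ (q : Fin l → ℝ) (i : Fin me),
      ∃ (T : (Fin n → ℝ) →ₗ[ℝ] ℝ) (c : ℝ), ∀ x' : Fin n → ℝ, g x' q i = T x' + c)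
    -- X(·) nonempty-valued and uniformly compact near p
    (N : Set (Fin l → ℝ)) (hN : N ∈ 𝓝 p)
    (hne : ∀ q ∈ N, (feasSet g h q).Nonempty)
    (hbd : Bornology.IsBounded (⋃ q ∈ N, feasSet g h q))
    (hmfcq : ∀ x' ∈ solSet f g h p, MFCQ g h p x') :
    ∀ hdir : Fin l → ℝ,
      Tendsto
        (fun t : ℝ => (valFun f g h (p + t • hdir) - valFun f g h p) / t)
        (𝓝[>] (0 : ℝ))
        (𝓝 (sInf ((fun x' =>
          sSup ((fun yz : (Fin me → ℝ) × (Fin mi → ℝ) =>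
              fderiv ℝ (fun p' => Lag f g h p' x' yz.1 yz.2) p hdir) ''
            MultSet f g h p x')) '' solSet f g h p))) := by
  intro hdir
  set q : ℝ → ℝ := fun t => (valFun f g h (p + t • hdir) - valFun f g h p) / t with hq
  set S : (Fin n → ℝ) → ℝ := fun x' =>
    sSup ((fun yz : (Fin me → ℝ) × (Fin mi → ℝ) =>
      fderiv ℝ (fun p' => Lag f g h p' x' yz.1 yz.2) p hdir) '' MultSet f g h p x') with hS
  have hsol : (solSet f g h p).Nonempty :=
    (valFun_attained f g h hfc1 hgc1 hhc1 N hne hbd p (mem_of_mem_nhds hN)).1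
  -- Optimality of `x'` means that every strictly feasible direction has `F d ≥ 0`; this is the
  -- primal upper bound for the zero perturbation, and duality then yields a multiplier.
  have hMne : ∀ x' ∈ solSet f g h p, (MultSet f g h p x').Nonempty := by
    intro x' hx'
    obtain ⟨yz, hyz, -⟩ := exists_mult_of_strict_lower_bound f g h p x' 0 hfc1 hgc1 hhc1 hx'.1
      (hmfcq x' hx') 0 (fun d hd1 hd2 => by
        refine le_of_forall_gt_imp_ge_of_dense fun r hr => ?_
        obtain ⟨t, ht⟩ := (eventually_quotient_lt f g h p x' 0 hfc1 hgc1 hhc1 hgaff N hN hne hbd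
          hx' (hmfcq x' hx') d hd1 hd2 r hr).exists
        simp only [smul_zero, add_zero, sub_self, zero_div] at ht
        exact ht.le)
    exact ⟨yz, hyz⟩
  have hMbdd : ∀ x' ∈ solSet f g h p, BddAbove ((fun yz : (Fin me → ℝ) × (Fin mi → ℝ) =>
      fderiv ℝ (fun p' => Lag f g h p' x' yz.1 yz.2) p hdir) '' MultSet f g h p x') := by
    intro x' hx'
    obtain ⟨d, hd1, hd2⟩ := exists_strict_direction g h p x' hdir (hmfcq x' hx')
    refine ⟨_, Set.forall_mem_image.2 fun yz hyz =>
      fderiv_lag_le_of_strict_direction f g h p x' hdir hfc1 hgc1 hhc1 d hd1 hd2 yz hyz⟩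
  have hupper : ∀ x' ∈ solSet f g h p, ∀ b, S x' < b → ∀ᶠ t in 𝓝[>] (0 : ℝ), q t < b := by
    intro x' hx' b hb
    by_contra hcon
    obtain ⟨yz, hyz, hle⟩ := exists_mult_of_strict_lower_bound f g h p x' hdir hfc1 hgc1 hhc1
      hx'.1 (hmfcq x' hx') b (fun d hd1 hd2 => by
        by_contra! hlt
        exact hcon (eventually_quotient_lt f g h p x' hdir hfc1 hgc1 hhc1 hgaff N hN hne hbd
          hx' (hmfcq x' hx') d hd1 hd2 b hlt))
    exact absurd (le_csSup (hMbdd x' hx') (Set.mem_image_of_mem _ hyz)) (not_le.2 (hb.trans_le hle))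
  have hlower : ∀ (t : ℕ → ℝ), Tendsto t atTop (𝓝[>] 0) → ∀ r₀ : ℝ,
      (∀ᶠ k in atTop, q (t k) ≤ r₀) → ∃ x' ∈ solSet f g h p, ∀ r : ℝ,
        (∀ᶠ k in atTop, q (t k) ≤ r) → S x' ≤ r := by
    intro t ht r₀ hr₀
    obtain ⟨x', hx', hall⟩ := exists_sol_of_quotient_le f g h p hdir hfc1 hgc1 hhc1 hfconv hhconv
      hgaff N hN hne hbd t ht r₀ hr₀
    exact ⟨x', hx', fun r hr => csSup_le ((hMne x' hx').image _)
      (Set.forall_mem_image.2 fun yz hyz => hall yz hyz r hr)⟩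
  -- If `S` were unbounded below on `Σ(p)`, the quotients would tend to `-∞`, and the
  -- lower bound would produce a point where `S` lies below every real number.
  have hSbdd : BddBelow (S '' solSet f g h p) := by
    by_contra hnb
    have hbot : ∀ r : ℝ, ∀ᶠ t in 𝓝[>] (0 : ℝ), q t ≤ r := by
      intro r
      by_contra hr
      refine hnb ⟨r, Set.forall_mem_image.2 fun x' hx' => ?_⟩
      by_contra! hlt
      exact hr ((hupper x' hx' r hlt).mono fun t ht => ht.le)
    obtain ⟨t, ht⟩ := exists_seq_tendsto (𝓝[>] (0 : ℝ))
    obtain ⟨x', -, hall⟩ := hlower t ht 0 (ht.eventually (hbot 0))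
    have := hall (S x' - 1) (ht.eventually (hbot _))
    linarith
  refine tendsto_order.2 ⟨fun a ha => ?_, fun b hb => ?_⟩
  · by_contra hcon
    have hfreq : ∃ᶠ t in 𝓝[>] (0 : ℝ), q t ≤ a :=
      (not_eventually.1 hcon).mono fun t ht => not_lt.1 ht
    obtain ⟨t, ht, hta⟩ := exists_seq_forall_of_frequently hfreq
    obtain ⟨x', hx', hall⟩ := hlower t ht a (Eventually.of_forall hta)
    have h1 := hall a (Eventually.of_forall hta)
    have h2 := csInf_le hSbdd (Set.mem_image_of_mem S hx')
    linarith
  · obtain ⟨_, ⟨x', hx', rfl⟩, hlt⟩ := exists_lt_of_csInf_lt (hsol.image S) hb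
    exact hupper x' hx' b hlt

end SensNLP
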